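/- arXiv:2412.06123 — 4 statements merged into one kernel-verified Lean document; each statement's English description precedes it below -/
import Mathlib

section
/- Let F be a field and A a finite-dimensional associative unital F-algebra. Then l(A) ≤ max{m(A) − 1, (dim_F A)/2}; precisely, for every generating set S of A, either l(S) ≤ m(A) − 1 or 2·l(S) ≤ dim_F A. -/
/-!
Let `V = span ({1} ∪ S)` and `l = lenS F S`. The chain `V ^ 0 < V ^ 1 < ⋯ < V ^ l` is strict, and
if each step but the last raises the dimension by at least two, then `dim A ≥ 1 + 2 (l - 1) + 1`.

Otherwise `V ^ n ⋖ V ^ (n + 1)` for some `n + 1 < l`. As `V * V ^ (n + 1)` is not contained in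
`V ^ (n + 1)`, some line `T = F t` with `t ∈ V` already moves `V ^ (n + 1)` out of itself, and
multiplication by `t` is then injective from `V ^ (n + 1) / V ^ n` to `V ^ (n + 2) / V ^ (n + 1)`.
Trading the factors of a product for `t` one at a time shows that `T ^ (n + 1)` is not contained in
`V ^ n`, so `V ^ (n + 1) = V ^ n ⊔ T ^ (n + 1)`. This propagates upwards to
`V ^ l = V ^ (l - 1) ⊔ T ^ l`; hence `t ^ l ∉ V ^ (l - 1)`, and the minimal polynomial of `t` has
degree greater than `l`. The argument about `T` uses only the order and the product of submodules,
so it is valid in any idempotent semiring.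
-/

/-- `Lk F S k` is the `F`-linear span of all products of at most `k` elements of `S`
(the empty product `1` has length `0`); equivalently `V ^ k` with `V = span F ({1} ∪ S)`. -/
noncomputable def Lk (F : Type*) [Field F] {A : Type*} [Ring A] [Algebra F A]
    (S : Set A) (k : ℕ) : Submodule F A :=
  (Submodule.span F ({1} ∪ S)) ^ k

/-- The length of a generating set `S`: the least `k` with `Lk F S k = ⊤`. -/
noncomputable def lenS (F : Type*) [Field F] {A : Type*} [Ring A] [Algebra F A]
    (S : Set A) : ℕ :=
  sInf {k | Lk F S k = ⊤}

/-- `mAlg F A` is the maximal degree over all `τ ∈ A` of the minimal polynomial of `τ`. -/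
noncomputable def mAlg (F A : Type*) [Field F] [Ring A] [Algebra F A] : ℕ :=
  sSup {d | ∃ τ : A, d = (minpoly F τ).natDegree}

section IdemSemiring

variable {α : Type*} [IdemSemiring α] {a b : α} {n : ℕ}

lemma le_of_covBy_of_mul_le {x y z : α} (hxy : x ⋖ y) (hbx : b * x ≤ y) (hby : ¬ b * y ≤ y)
    (hz : z ≤ y) (hbz : b * z ≤ y) : z ≤ x := by
  obtain heq | heq := hxy.eq_or_eq le_sup_left (sup_le hxy.le hz)
  · exact sup_eq_left.1 heq
  · refine absurd ?_ hby
    calc b * y = b * x + b * z := by rw [← heq, ← add_eq_sup, mul_add]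
      _ ≤ y := add_le hbx hbz

-- If `b ^ (n + 1) ≤ a ^ n`, cancelling the factors `b` one by one gives `a ^ (n + 1) ≤ a ^ n`.
lemma not_pow_succ_le_pow_of_covBy (hb : b ≤ a) (hcov : a ^ n ⋖ a ^ (n + 1))
    (hesc : ¬ b * a ^ (n + 1) ≤ a ^ (n + 1)) : ¬ b ^ (n + 1) ≤ a ^ n := by
  intro hbn
  have hbx : b * a ^ n ≤ a ^ (n + 1) := by
    rw [pow_succ']
    gcongr
  have hmixed : ∀ i j, j + i = n + 1 → b ^ j * a ^ i ≤ a ^ n := by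
    intro i
    induction i with
    | zero =>
      rintro j rfl
      simpa using hbn
    | succ i ih =>
      intro j hij
      refine le_of_covBy_of_mul_le hcov hbx hesc ?_ ?_
      · calc b ^ j * a ^ (i + 1) ≤ a ^ j * a ^ (i + 1) := by gcongr
          _ = a ^ (n + 1) := by rw [← pow_add, hij]
      · calc b * (b ^ j * a ^ (i + 1)) = b ^ (j + 1) * a ^ i * a := by
              simp only [pow_succ', pow_succ a i, mul_assoc]
          _ ≤ a ^ n * a := by gcongr; exact ih (j + 1) (by omega)
          _ = a ^ (n + 1) := (pow_succ a n).symm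
  exact hcov.lt.not_ge (by simpa using hmixed (n + 1) 0 (zero_add _))

lemma pow_succ_le_pow_sup_pow_succ (hb : b ≤ a) (h : a ^ (n + 1) ≤ a ^ n ⊔ b ^ (n + 1))
    {k : ℕ} (hnk : n ≤ k) : a ^ (k + 1) ≤ a ^ k ⊔ b ^ (k + 1) := by
  induction k, hnk using Nat.le_induction with
  | base => exact h
  | succ k _ ih =>
    rw [← add_eq_sup] at ih ⊢
    have hright : b ^ (k + 1) * a ≤ a ^ (k + 1) + b ^ (k + 2) :=
      calc b ^ (k + 1) * a = b * (b ^ k * a) := by rw [pow_succ', mul_assoc]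
        _ ≤ b * (a ^ k * a) := by gcongr
        _ ≤ b * (a ^ k + b ^ (k + 1)) := by rw [← pow_succ]; gcongr
        _ = b * a ^ k + b ^ (k + 2) := by rw [mul_add, ← pow_succ']
        _ ≤ a * a ^ k + b ^ (k + 2) := by gcongr
        _ = a ^ (k + 1) + b ^ (k + 2) := by rw [← pow_succ']
    calc a ^ (k + 2) = a ^ (k + 1) * a := pow_succ a (k + 1)
      _ ≤ (a ^ k + b ^ (k + 1)) * a := by gcongr
      _ = a ^ (k + 1) + b ^ (k + 1) * a := by rw [add_mul, ← pow_succ]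
      _ ≤ a ^ (k + 1) + b ^ (k + 2) := add_le le_self_add hright

lemma pow_succ_le_pow_sup_pow_succ_of_covBy (hb : b ≤ a) (hcov : a ^ n ⋖ a ^ (n + 1))
    (hesc : ¬ b * a ^ (n + 1) ≤ a ^ (n + 1)) {k : ℕ} (hnk : n ≤ k) :
    a ^ (k + 1) ≤ a ^ k ⊔ b ^ (k + 1) := by
  refine pow_succ_le_pow_sup_pow_succ hb ?_ hnk
  have hle : a ^ n ⊔ b ^ (n + 1) ≤ a ^ (n + 1) := sup_le hcov.le (by gcongr)
  obtain heq | heq := hcov.eq_or_eq le_sup_left hle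
  · exact absurd (sup_eq_left.1 heq) (not_pow_succ_le_pow_of_covBy hb hcov hesc)
  · exact heq.ge

end IdemSemiring

section Submodule

variable {R A : Type*} [CommSemiring R] [Semiring A] [Algebra R A]

lemma one_le_span_one_union (S : Set A) : 1 ≤ Submodule.span R ({1} ∪ S) :=
  Submodule.one_le.2 (Submodule.subset_span (Or.inl rfl))

lemma exists_mem_span_singleton_mul_not_le {V W U : Submodule R A} (h : ¬ V * W ≤ U) :
    ∃ t ∈ V, ¬ Submodule.span R {t} * W ≤ U := by
  contrapose! h
  exact Submodule.mul_le.2 fun t ht w hw ↦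
    h t ht (Submodule.mul_mem_mul (Submodule.mem_span_singleton_self t) hw)

lemma exists_mem_pow_succ_notMem_pow {V : Submodule R A} {n k : ℕ} (hnk : n ≤ k)
    (hcov : V ^ n ⋖ V ^ (n + 1)) (hn : V ^ (n + 1) < V ^ (n + 2)) (hk : V ^ k < V ^ (k + 1)) :
    ∃ t ∈ V, t ^ (k + 1) ∉ V ^ k := by
  rw [pow_succ' V (n + 1)] at hn
  obtain ⟨t, ht, hesc⟩ := exists_mem_span_singleton_mul_not_le hn.not_ge
  have hspan : Submodule.span R {t} ≤ V := (Submodule.span_singleton_le_iff_mem t V).2 ht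
  refine ⟨t, ht, fun hmem ↦ hk.not_ge ?_⟩
  have hpow := pow_succ_le_pow_sup_pow_succ_of_covBy hspan hcov hesc hnk
  rw [Submodule.span_pow, Set.singleton_pow] at hpow
  exact hpow.trans (sup_le le_rfl ((Submodule.span_singleton_le_iff_mem _ _).2 hmem))

lemma toSubmodule_adjoin_le_of_mul_le {S : Set A} {V W : Submodule R A} (hSV : S ⊆ V) (hW : 1 ≤ W)
    (hmul : W * V ≤ W) : Subalgebra.toSubmodule (Algebra.adjoin R S) ≤ W := by
  rw [Algebra.adjoin_toSubmodule_le]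
  intro x hx
  induction hx using Submonoid.closure_induction_right with
  | one => exact Submodule.one_le.1 hW
  | mul_right x _ y hy ih => exact hmul (Submodule.mul_mem_mul ih (hSV hy))

end Submodule

lemma pow_mem_pow_of_natDegree_minpoly_le {R A : Type*} [CommRing R] [Ring A] [Algebra R A]
    {V : Submodule R A} (hV : 1 ≤ V) {t : A} (hint : IsIntegral R t) (ht : t ∈ V) {k : ℕ}
    (hdeg : (minpoly R t).natDegree ≤ k + 1) (j : ℕ) : t ^ j ∈ V ^ k := by
  have hmem : t ^ j ∈ Subalgebra.toSubmodule (Algebra.adjoin R {t}) :=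
    pow_mem (Algebra.self_mem_adjoin_singleton R t) j
  rw [← Submodule.span_range_natDegree_eq_adjoin (minpoly.monic hint) (minpoly.aeval R t)] at hmem
  refine Submodule.span_le.2 ?_ hmem
  simp only [Finset.coe_image, Finset.coe_range, Set.image_subset_iff]
  intro i hi
  have hik : i ≤ k := Nat.lt_succ_iff.1 (hi.trans_le hdeg)
  exact pow_le_pow_right' hV hik (Submodule.pow_mem_pow V ht i)

lemma add_two_mul_le_of_not_covBy {α : Type*} [Preorder α] {r : α → ℕ} (hr : StrictMono r)
    {a : ℕ → α} {l : ℕ} (hlt : ∀ k < l, a k < a (k + 1))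
    (hcov : ∀ k < l, ¬ a k ⋖ a (k + 1)) : r (a 0) + 2 * l ≤ r (a l) := by
  induction l with
  | zero => simp
  | succ l ih =>
    obtain ⟨c, hac, hca⟩ := exists_lt_lt_of_not_covBy (hlt l l.lt_succ_self) (hcov l l.lt_succ_self)
    have := ih (fun k hk ↦ hlt k (by omega)) (fun k hk ↦ hcov k (by omega))
    have := hr hac
    have := hr hca
    omega

section Length

variable {F A : Type*} [Field F] [Ring A] [Algebra F A]

lemma exists_lt_natDegree_minpoly_or_two_mul_le_finrank [FiniteDimensional F A]
    {V : Submodule F A} (hV : 1 ≤ V) {l : ℕ} (hlt : ∀ k < l, V ^ k < V ^ (k + 1)) :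
    (∃ t ∈ V, l < (minpoly F t).natDegree) ∨ 2 * l ≤ Module.finrank F A := by
  cases l with
  | zero => simp
  | succ l =>
    by_cases hcov : ∃ n < l, V ^ n ⋖ V ^ (n + 1)
    · obtain ⟨n, hn, hcov⟩ := hcov
      obtain ⟨t, ht, htl⟩ := exists_mem_pow_succ_notMem_pow hn.le hcov
        (hlt (n + 1) (by omega)) (hlt l l.lt_succ_self)
      left
      refine ⟨t, ht, ?_⟩
      by_contra! hdeg
      exact htl (pow_mem_pow_of_natDegree_minpoly_le hV (Algebra.IsIntegral.isIntegral t) ht hdeg _)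
    · right
      push Not at hcov
      have hone : 0 < Module.finrank F ↥(V ^ 0) := by
        have : Nontrivial A :=
          (Submodule.nontrivial_iff F).1 (nontrivial_of_lt _ _ (hlt 0 l.succ_pos))
        rw [pow_zero]
        exact Submodule.one_le_finrank_iff.2 one_ne_zero
      have hgrow := add_two_mul_le_of_not_covBy Submodule.finrank_strictMono
        (fun k hk ↦ hlt k (by omega)) hcov
      have hlast := Submodule.finrank_lt_finrank_of_lt (hlt l l.lt_succ_self)
      have := Submodule.finrank_le (V ^ (l + 1))
      omega

lemma Lk_lt_Lk_succ {S : Set A} (hS : Algebra.adjoin F S = ⊤) {k : ℕ} (hk : k < lenS F S) :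
    Lk F S k < Lk F S (k + 1) := by
  have hone : 1 ≤ Submodule.span F ({1} ∪ S) := one_le_span_one_union S
  refine (pow_le_pow_right' hone k.le_succ).lt_of_not_ge fun hle ↦ Nat.notMem_of_lt_sInf hk ?_
  have hadjoin : Subalgebra.toSubmodule (Algebra.adjoin F S) ≤ Lk F S k :=
    toSubmodule_adjoin_le_of_mul_le (Set.subset_union_right.trans Submodule.subset_span)
      (one_le_pow_of_one_le' hone k) ((pow_succ _ k).symm.trans_le hle)
  rwa [hS, Algebra.top_toSubmodule, top_le_iff] at hadjoin

lemma natDegree_minpoly_le_mAlg [FiniteDimensional F A] (t : A) :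
    (minpoly F t).natDegree ≤ mAlg F A := by
  refine le_csSup ⟨Module.finrank F A, ?_⟩ ⟨t, rfl⟩
  rintro _ ⟨τ, rfl⟩
  exact minpoly.natDegree_le τ

end Length

theorem stmt_0 (F A : Type*) [Field F] [Ring A] [Algebra F A] [FiniteDimensional F A]
    (S : Set A) (hS : Algebra.adjoin F S = ⊤) :
    lenS F S ≤ mAlg F A - 1 ∨ 2 * lenS F S ≤ Module.finrank F A := by
  refine (exists_lt_natDegree_minpoly_or_two_mul_le_finrank (one_le_span_one_union S)
    fun k hk ↦ Lk_lt_Lk_succ hS hk).imp_left ?_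
  rintro ⟨t, -, ht⟩
  exact Nat.le_sub_one_of_lt (ht.trans_le (natDegree_minpoly_le_mAlg t))
end

section
/- Let F be a field and n ≥ 3. The bicirculant algebra C_n(F), i.e., the unital F-subalgebra of M_n(F) generated by {A_n, B_n}, has dimension 2n − 2 over F if n is even, and dimension 2n − 1 if n is odd. -/
/-!
Index matrices by a finite commutative group `G`; the theorem is the case of `G = ℤ/n`. The matrices
`v (i - j) + w (i + j)` are closed under multiplication, and they are spanned by the translation
matrices and their products with a single reflection, so they form the bicirculant algebra. A
circulant matrix `v (i - j)` equals an anti-circulant matrix `w (i + j)` exactly when `v = w` is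
constant on the cosets of `2G`. Hence `v` and `w` become unique once `w` is required to vanish on a
set of representatives of `G ⧸ 2G`, and the algebra is free of rank `|G| + (|G| - |G ⧸ 2G|)`.
-/

/-- The circulant permutation matrix `A_n` (ones in positions `(i, i+1)` cyclically). -/
def Acirc (n : ℕ) (F : Type*) [Field F] : Matrix (Fin n) (Fin n) F :=
  Matrix.of fun i j => if (j : ℕ) = ((i : ℕ) + 1) % n then 1 else 0

/-- The anti-circulant permutation matrix `B_n` (ones in positions `(i, n+1-i)`,
i.e. `i + j = n - 1` in 0-indexed coordinates). -/
def Bcirc (n : ℕ) (F : Type*) [Field F] : Matrix (Fin n) (Fin n) F :=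
  Matrix.of fun i j => if (i : ℕ) + (j : ℕ) = n - 1 then 1 else 0

open Matrix Module

theorem extend_val_domRestrict_zero {α M : Type*} [Zero M] {s : Set α} {f : α → M}
    (hf : ∀ x ∉ s, f x = 0) : Function.extend Subtype.val (s.domRestrict f) 0 = f := by
  ext x
  by_cases hx : x ∈ s
  · rw [Function.extend_val_apply hx, Set.domRestrict_apply]
  · rw [Function.extend_val_apply' hx, hf x hx, Pi.zero_apply]

/-- The anti-circulant (or Hankel) matrix of `v : G → R`, the counterpart of `Matrix.circulant` that
is constant along `i + j` instead of `i - j`. -/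
def antiCirculant {G R : Type*} [Add G] (v : G → R) : Matrix G G R :=
  of fun i j => v (i + j)

theorem antiCirculant_zero {G R : Type*} [Add G] [Zero R] :
    antiCirculant (0 : G → R) = 0 := rfl

theorem antiCirculant_add {G R : Type*} [Add G] [Add R] (v w : G → R) :
    antiCirculant (v + w) = antiCirculant v + antiCirculant w := rfl

theorem antiCirculant_smul {G R S : Type*} [Add G] [SMul S R] (c : S) (v : G → R) :
    antiCirculant (c • v) = c • antiCirculant v := rfl

section Multiplication

variable {G R : Type*} [AddCommGroup G] [Fintype G]

theorem circulant_mul_antiCirculant [NonUnitalNonAssocSemiring R] (v w : G → R) :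
    circulant v * antiCirculant w = antiCirculant (circulant v *ᵥ w) := by
  ext i j
  refine Fintype.sum_equiv (Equiv.addRight j) _ _ fun k => ?_
  simp [antiCirculant]

theorem antiCirculant_mul_circulant [NonUnitalNonAssocSemiring R] (v w : G → R) :
    antiCirculant v * circulant w = circulant v * antiCirculant fun i => w (-i) := by
  ext i j
  refine Fintype.sum_equiv (Equiv.neg G) _ _ fun k => ?_
  simp [antiCirculant, sub_eq_neg_add, add_comm]

theorem antiCirculant_mul_antiCirculant [NonUnitalNonAssocSemiring R] (v w : G → R) :
    antiCirculant v * antiCirculant w = circulant v * circulant fun i => w (-i) := by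
  ext i j
  refine Fintype.sum_equiv (Equiv.neg G) _ _ fun k => ?_
  simp [antiCirculant, add_comm]

variable [DecidableEq G] [NonAssocSemiring R]

theorem circulant_single_mulVec_single (a b : G) :
    circulant (Pi.single a (1 : R)) *ᵥ Pi.single b 1 = Pi.single (a + b) 1 := by
  ext i
  simp [Pi.single_apply, sub_eq_iff_eq_add]

theorem circulant_single_mul_circulant_single (a b : G) :
    circulant (Pi.single a (1 : R)) * circulant (Pi.single b 1) =
      circulant (Pi.single (a + b) 1) := by
  rw [circulant_mul, circulant_single_mulVec_single]

theorem circulant_single_mul_antiCirculant_single (a b : G) :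
    circulant (Pi.single a (1 : R)) * antiCirculant (Pi.single b 1) =
      antiCirculant (Pi.single (a + b) 1) := by
  rw [circulant_mul_antiCirculant, circulant_single_mulVec_single]

end Multiplication

/-- The subgroup `2G` of a commutative group `G`. -/
abbrev doubles (G : Type*) [AddCommGroup G] : AddSubgroup G :=
  (nsmulAddMonoidHom 2 : G →+ G).range

theorem circulant_eq_antiCirculant_iff {G R : Type*} [AddCommGroup G] {v w : G → R} :
    circulant v = antiCirculant w ↔ v = w ∧ v.FactorsThrough ((↑) : G → G ⧸ doubles G) := by
  simp only [← Matrix.ext_iff, circulant_apply, antiCirculant, of_apply]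
  constructor
  · intro h
    obtain rfl : v = w := funext fun i => by simpa using h i 0
    refine ⟨rfl, fun a b hab => ?_⟩
    obtain ⟨y, hy⟩ := QuotientAddGroup.eq.1 hab
    have hb : a + y + y = b := by
      rw [add_assoc, ← two_nsmul, ← nsmulAddMonoidHom_apply, hy, add_neg_cancel_left]
    simpa [hb] using h (a + y) y
  · rintro ⟨rfl, hv⟩ i j
    refine hv (QuotientAddGroup.eq.2 ⟨j, ?_⟩)
    rw [nsmulAddMonoidHom_apply]
    abel

section Bicirculant

variable (G R : Type*) [AddCommGroup G] [Ring R]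

/-- The linear parametrization `(v, w) ↦ circulant v + antiCirculant w` of the bicirculant
matrices. It is not injective. -/
def bicirculantMap : (G → R) × (G → R) →ₗ[R] Matrix G G R where
  toFun p := circulant p.1 + antiCirculant p.2
  map_add' p q := by
    rw [Prod.fst_add, Prod.snd_add, circulant_add, antiCirculant_add, add_add_add_comm]
  map_smul' r p := by
    rw [Prod.smul_fst, Prod.smul_snd, circulant_smul, antiCirculant_smul, ← smul_add,
      RingHom.id_apply]

variable {G R}

theorem bicirculantMap_apply (v w : G → R) :
    bicirculantMap G R (v, w) = circulant v + antiCirculant w := rfl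

theorem bicirculantMap_eq_zero_iff {v w : G → R} :
    bicirculantMap G R (v, w) = 0 ↔
      v = -w ∧ v.FactorsThrough ((↑) : G → G ⧸ doubles G) := by
  rw [← circulant_eq_antiCirculant_iff, ← neg_one_smul R w, antiCirculant_smul, neg_one_smul,
    bicirculantMap_apply, add_eq_zero_iff_eq_neg]

theorem range_bicirculantMap_le [Finite G] [DecidableEq G] {p : Submodule R (Matrix G G R)}
    (h_circulant : ∀ a, circulant (Pi.single a 1) ∈ p)
    (h_antiCirculant : ∀ a, antiCirculant (Pi.single a 1) ∈ p) :
    LinearMap.range (bicirculantMap G R) ≤ p := by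
  rw [LinearMap.range_eq_map, ← ((Pi.basisFun R G).prod (Pi.basisFun R G)).span_eq,
    Submodule.map_span_le]
  rintro _ ⟨a | a, rfl⟩
  · simpa [bicirculantMap_apply, antiCirculant_zero] using h_circulant a
  · simpa [bicirculantMap_apply] using h_antiCirculant a

section Rank

variable (G R)

/-- A set of representatives of the cosets of `2G` in `G`. -/
def cosetReps : Set G :=
  Set.range (Quotient.out : G ⧸ doubles G → G)

theorem card_cosetReps : Nat.card (cosetReps G) = (doubles G).index :=
  Nat.card_range_of_injective Quotient.out_injective

/-- The restriction of `bicirculantMap` to the pairs `(v, w)` with `w` vanishing on `cosetReps G`;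
such a `w` is encoded by its restriction to the complement. -/
noncomputable def reducedBicirculantMap :
    (G → R) × (↥(cosetReps G)ᶜ → R) →ₗ[R] Matrix G G R :=
  bicirculantMap G R ∘ₗ LinearMap.id.prodMap (Function.ExtendByZero.linearMap R Subtype.val)

variable {G R}

theorem reducedBicirculantMap_apply (v : G → R) (u : ↥(cosetReps G)ᶜ → R) :
    reducedBicirculantMap G R (v, u) =
      bicirculantMap G R (v, Function.extend Subtype.val u 0) := rfl

variable (G R)

theorem reducedBicirculantMap_injective : Function.Injective (reducedBicirculantMap G R) := by
  rw [← LinearMap.ker_eq_bot, LinearMap.ker_eq_bot']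
  rintro ⟨v, u⟩ h
  obtain ⟨hv, hfac⟩ := bicirculantMap_eq_zero_iff.1 (reducedBicirculantMap_apply v u ▸ h)
  have hv0 : v = 0 := by
    ext x
    have hx : (x : G ⧸ doubles G).out ∉ (cosetReps G)ᶜ := fun hx => hx ⟨_, rfl⟩
    rw [← hfac (Quotient.out_eq (x : G ⧸ doubles G)), hv, Pi.neg_apply,
      Function.extend_val_apply' hx, Pi.zero_apply, neg_zero, Pi.zero_apply]
  have hu0 : u = 0 := by
    have h_extend : Function.extend Subtype.val u 0 = 0 := by rw [← neg_eq_zero, ← hv, hv0]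
    exact Function.extend_injective Subtype.val_injective (0 : G → R)
      (h_extend.trans (Function.extend_zero _).symm)
  rw [hv0, hu0, Prod.mk_zero_zero]

theorem range_reducedBicirculantMap :
    LinearMap.range (reducedBicirculantMap G R) = LinearMap.range (bicirculantMap G R) := by
  refine le_antisymm (LinearMap.range_comp_le_range _ _) ?_
  rintro _ ⟨⟨v, w⟩, rfl⟩
  let h : G → R := fun x => w (x : G ⧸ doubles G).out
  have h_ker : bicirculantMap G R (h, -h) = 0 :=
    bicirculantMap_eq_zero_iff.2 ⟨(neg_neg h).symm, fun x y hxy => by simp only [h, hxy]⟩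
  have h_reps : ∀ x ∉ (cosetReps G)ᶜ, (w - h) x = 0 := by
    intro x hx
    obtain ⟨q, rfl⟩ := not_not.1 hx
    simp [h]
  refine ⟨(v + h, (cosetReps G)ᶜ.domRestrict (w - h)), ?_⟩
  rw [reducedBicirculantMap_apply, extend_val_domRestrict_zero h_reps, sub_eq_add_neg,
    ← Prod.mk_add_mk, map_add, h_ker, add_zero]

theorem finrank_range_bicirculantMap [Finite G] [StrongRankCondition R] :
    finrank R (LinearMap.range (bicirculantMap G R)) = 2 * Nat.card G - (doubles G).index := by
  cases nonempty_fintype G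
  classical
  have h_le : (doubles G).index ≤ Nat.card G := card_cosetReps G ▸ Finite.card_subtype_le _
  rw [← range_reducedBicirculantMap,
    LinearMap.finrank_range_of_inj (reducedBicirculantMap_injective G R), finrank_prod,
    finrank_fintype_fun_eq_card, finrank_fintype_fun_eq_card, Fintype.card_compl_set,
    ← Nat.card_eq_fintype_card, ← Nat.card_eq_fintype_card, card_cosetReps]
  omega

end Rank

theorem mul_mem_range_bicirculantMap [Fintype G] {M N : Matrix G G R}
    (hM : M ∈ LinearMap.range (bicirculantMap G R))
    (hN : N ∈ LinearMap.range (bicirculantMap G R)) :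
    M * N ∈ LinearMap.range (bicirculantMap G R) := by
  obtain ⟨⟨v, w⟩, rfl⟩ := hM
  obtain ⟨⟨v', w'⟩, rfl⟩ := hN
  refine ⟨(circulant v *ᵥ v' + circulant w *ᵥ fun i => w' (-i),
    circulant v *ᵥ w' + circulant w *ᵥ fun i => v' (-i)), ?_⟩
  simp only [bicirculantMap_apply, circulant_add, antiCirculant_add, add_mul, mul_add,
    antiCirculant_mul_circulant, antiCirculant_mul_antiCirculant, circulant_mul,
    circulant_mul_antiCirculant]
  abel

end Bicirculant

section Algebra

variable {G R : Type*} [AddCommGroup G] [Fintype G] [DecidableEq G] [CommRing R]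

variable (G R) in
/-- The algebra of all sums of a circulant and an anti-circulant matrix indexed by `G`; for
`G = ℤ/n` it is the bicirculant algebra `C_n`. -/
def bicirculantSubalgebra : Subalgebra R (Matrix G G R) :=
  (LinearMap.range (bicirculantMap G R)).toSubalgebra
    ⟨(Pi.single 0 1, 0), by
      rw [bicirculantMap_apply, circulant_single_one, antiCirculant_zero, add_zero]⟩
    fun _ _ => mul_mem_range_bicirculantMap

theorem circulant_mem_bicirculantSubalgebra (v : G → R) :
    circulant v ∈ bicirculantSubalgebra G R :=
  ⟨(v, 0), by rw [bicirculantMap_apply, antiCirculant_zero, add_zero]⟩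

theorem antiCirculant_mem_bicirculantSubalgebra (w : G → R) :
    antiCirculant w ∈ bicirculantSubalgebra G R :=
  ⟨(0, w), by rw [bicirculantMap_apply, circulant_zero, zero_add]⟩

theorem adjoin_eq_bicirculantSubalgebra {S : Set G} (hS : AddSubgroup.closure S = ⊤) (c : G) :
    Algebra.adjoin R (insert (antiCirculant (Pi.single c 1))
      ((fun a => circulant (Pi.single a 1)) '' S)) = bicirculantSubalgebra G R := by
  apply le_antisymm
  · rw [Algebra.adjoin_le_iff, Set.insert_subset_iff, Set.image_subset_iff]
    exact ⟨antiCirculant_mem_bicirculantSubalgebra _,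
      fun _ _ => circulant_mem_bicirculantSubalgebra _⟩
  set A := Algebra.adjoin R (insert (antiCirculant (Pi.single c 1))
      ((fun a => circulant (Pi.single a (1 : R))) '' S))
  have h_circulant (a : G) : circulant (Pi.single a 1) ∈ A := by
    have ha : a ∈ AddSubmonoid.closure S := by
      rw [← AddSubgroup.closure_toAddSubmonoid_of_finite, hS]
      trivial
    induction ha using AddSubmonoid.closure_induction with
    | mem a ha => exact Algebra.subset_adjoin (.inr ⟨a, ha, rfl⟩)
    | zero => exact circulant_single_one R G ▸ one_mem A
    | add a b _ _ ha hb =>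
      exact circulant_single_mul_circulant_single (R := R) a b ▸ mul_mem ha hb
  refine range_bicirculantMap_le (p := Subalgebra.toSubmodule A) h_circulant fun a => ?_
  have h_mul := mul_mem (h_circulant (a - c)) (Algebra.subset_adjoin (Set.mem_insert _ _))
  rwa [circulant_single_mul_antiCirculant_single, sub_add_cancel] at h_mul

end Algebra

theorem stmt_4_general {R G : Type*} [CommRing R] [Nontrivial R] [AddCommGroup G] [Fintype G]
    [DecidableEq G] {S : Set G} (hS : AddSubgroup.closure S = ⊤) (c : G) :
    finrank R (Algebra.adjoin R (insert (antiCirculant (Pi.single c (1 : R)))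
      ((fun a => circulant (Pi.single a 1)) '' S))) =
      2 * Nat.card G - (doubles G).index := by
  rw [adjoin_eq_bicirculantSubalgebra hS, ← Subalgebra.finrank_toSubmodule]
  exact finrank_range_bicirculantMap G R

section Fin

variable (n : ℕ) [NeZero n]

theorem closure_neg_one_fin : AddSubgroup.closure {(-1 : Fin n)} = ⊤ := by
  open Fin.CommRing in
  rw [AddSubgroup.closure_singleton_neg, ← AddSubgroup.zmultiples_eq_closure, eq_top_iff]
  exact fun k _ => ⟨k.val, by simp⟩

theorem index_doubles_fin : (doubles (Fin n)).index = if Even n then 2 else 1 := by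
  have : IsAddCyclic (Fin n) := isAddCyclic_iff_exists_zmultiples_eq_top.2
    ⟨-1, (AddSubgroup.zmultiples_eq_closure _).trans (closure_neg_one_fin n)⟩
  rw [IsAddCyclic.index_nsmulAddMonoidHom_range, Nat.card_fin]
  split_ifs with h
  · exact Nat.gcd_eq_right h.two_dvd
  · exact Nat.coprime_two_right.2 (Nat.not_even_iff_odd.1 h)

variable (F : Type*) [Field F]

theorem Acirc_eq_circulant : Acirc n F = circulant (Pi.single (-1) 1) := by
  ext i j
  have h : (j : ℕ) = (i + 1) % n ↔ i - j = -1 := by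
    rw [sub_eq_iff_eq_add, neg_add_eq_sub, eq_sub_iff_add_eq, eq_comm, Fin.ext_iff,
      Fin.val_add, Fin.val_one', Nat.add_mod_mod]
  simp [Acirc, Pi.single_apply, h]

theorem Bcirc_eq_antiCirculant : Bcirc n F = antiCirculant (Pi.single (-1) 1) := by
  ext i j
  have h : (i + j : ℕ) = n - 1 ↔ i + j = -1 := by
    rw [eq_neg_iff_add_eq_zero, Fin.ext_iff, Fin.val_add, Fin.val_add, Fin.val_one',
      Nat.mod_add_mod, Nat.add_mod_mod, Fin.val_zero, ← Nat.dvd_iff_mod_eq_zero]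
    constructor
    · intro h
      exact ⟨1, by omega⟩
    · intro h
      have := Nat.eq_of_dvd_of_lt_two_mul (Nat.succ_ne_zero _) h (by omega)
      omega
  simp [Bcirc, antiCirculant, Pi.single_apply, h]

end Fin

theorem stmt_4 (F : Type*) [Field F] (n : ℕ) (hn : 3 ≤ n) :
    Module.finrank F
        ↥(Algebra.adjoin F ({Acirc n F, Bcirc n F} : Set (Matrix (Fin n) (Fin n) F))) =
      if Even n then 2 * n - 2 else 2 * n - 1 := by
  have : NeZero n := ⟨by omega⟩
  rw [Acirc_eq_circulant, Bcirc_eq_antiCirculant, Set.pair_comm,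
    ← Set.image_singleton (f := fun a => circulant (Pi.single a (1 : F))),
    stmt_4_general (closure_neg_one_fin n), Nat.card_fin, index_doubles_fin, apply_ite (2 * n - ·)]
end

section
/- Let F be an arbitrary field and n ≥ 3 odd. Then m(F D_n) ≤ n + 1; that is, every element τ of the group algebra F D_n has a minimal polynomial over F of degree at most n + 1. -/
/-!
For odd `n` let `D_n` act on the vertices `ZMod n` of the regular `n`-gon. A rotation and a
reflection always agree at some vertex, and no third element of `D_n` agrees with them there. Hence
if `x` lies in the kernel of the permutation representation of the group algebra, its coefficients
at any rotation and any reflection sum to zero, and so `τ * x = s • x`, where `s` is the value at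
`τ` of the sign character. By Cayley–Hamilton this applies to `x = p(τ)`, with `p` the
characteristic polynomial, of degree `n`, of the action of `τ`: therefore `(X - s) p` annihilates
`τ`.
-/

open Polynomial DihedralGroup

section General

variable {R : Type*}

lemma natDegree_minpoly_le_natDegree_add_finrank [CommRing R] [Nontrivial R]
    {A M : Type*} [Ring A] [Algebra R A]
    [AddCommGroup M] [Module R M] [Module.Free R M] [Module.Finite R M]
    (φ : A →ₐ[R] Module.End R M) {a : A} {q : R[X]} (hq : q.Monic)
    (hker : ∀ x, φ x = 0 → aeval a q * x = 0) :
    (minpoly R a).natDegree ≤ q.natDegree + Module.finrank R M := by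
  set p := (φ a).charpoly
  have map_aeval_eq_zero : φ (aeval a p) = 0 := by
    rw [← aeval_algHom_apply, LinearMap.aeval_self_charpoly]
  have aeval_mul_eq_zero : aeval a (q * p) = 0 := by
    rw [map_mul, hker _ map_aeval_eq_zero]
  calc (minpoly R a).natDegree
      ≤ (q * p).natDegree :=
        natDegree_le_natDegree <|
          minpoly.min R a (hq.mul (LinearMap.charpoly_monic _)) aeval_mul_eq_zero
    _ ≤ q.natDegree + p.natDegree := natDegree_mul_le
    _ = q.natDegree + Module.finrank R M := by rw [LinearMap.charpoly_natDegree]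

variable [CommSemiring R] {G : Type*} [Monoid G]

lemma smul_eq_lift_smul_of_single_smul {M : Type*} [AddCommMonoid M] [Module R M]
    [Module (MonoidAlgebra R G) M] [IsScalarTower R (MonoidAlgebra R G) M] (χ : G →* R) {x : M}
    (hx : ∀ g, MonoidAlgebra.single g (1 : R) • x = χ g • x) (a : MonoidAlgebra R G) :
    a • x = MonoidAlgebra.lift R R G χ a • x := by
  induction a using MonoidAlgebra.induction_on with
  | of g => simpa using hx g
  | add a b ha hb => rw [add_smul, ha, hb, map_add, add_smul]
  | smul r a ha => rw [smul_assoc, ha, map_smul, smul_assoc]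

lemma coeff_asAlgebraHom_ofMulAction_single [Fintype G] {H : Type*} [MulAction G H]
    [DecidableEq H] (a : MonoidAlgebra R G) (j k : H) :
    ((Representation.ofMulAction R G H).asAlgebraHom a (MonoidAlgebra.single j 1)).coeff k =
      ∑ g with g • j = k, a.coeff g := by
  rw [Representation.asAlgebraHom_def, MonoidAlgebra.lift_apply,
    Finsupp.sum_fintype _ _ (by simp)]
  simp [Finsupp.single_apply, Finset.sum_filter]

end General

section Dihedral

variable {n : ℕ}

/-- The action of the dihedral group on the vertices of the regular `n`-gon, labelled by `ZMod n`.
Since `sr i` is the product of `s = sr 0` with `r i` in this order, letting `s` act by `x ↦ -x`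
forces `sr i` to act by `x ↦ -(x + i)`. -/
instance dihedralVertexAction : MulAction (DihedralGroup n) (ZMod n) where
  smul
    | r i, x => x + i
    | sr i, x => -(x + i)
  one_smul := add_zero
  mul_smul := by
    rintro (i | i) (j | j) x
    · change x + (i + j) = x + j + i
      ring
    · change -(x + (j - i)) = -(x + j) + i
      ring
    · change -(x + (i + j)) = -(x + j + i)
      ring
    · change x + (j - i) = -(-(x + j) + i)
      ring

lemma r_smul (i x : ZMod n) : r i • x = x + i := rfl

lemma sr_smul (i x : ZMod n) : sr i • x = -(x + i) := rfl

lemma filter_smul_eq_r_smul [NeZero n] {i j x : ZMod n} (hx : r i • x = sr j • x) :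
    ({g | g • x = r i • x} : Finset (DihedralGroup n)) = {r i, sr j} := by
  ext (k | k)
  · simp [r_smul]
  · simp [hx, sr_smul]

lemma exists_r_smul_eq_sr_smul (hodd : Odd n) (i j : ZMod n) :
    ∃ x : ZMod n, r i • x = sr j • x := by
  have isUnit_two : IsUnit (2 : ZMod n) := by
    exact_mod_cast (ZMod.isUnit_iff_coprime 2 n).2 hodd.coprime_two_left
  obtain ⟨x, hx⟩ := isUnit_two.dvd (a := -(i + j))
  refine ⟨x, ?_⟩
  rw [r_smul, sr_smul]
  linear_combination -hx

lemma coeff_r_add_coeff_sr_eq_zero {R : Type*} [CommSemiring R] (hodd : Odd n)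
    {x : MonoidAlgebra R (DihedralGroup n)}
    (hx : (Representation.ofMulAction R (DihedralGroup n) (ZMod n)).asAlgebraHom x = 0)
    (i j : ZMod n) : x.coeff (r i) + x.coeff (sr j) = 0 := by
  have : NeZero n := ⟨hodd.pos.ne'⟩
  obtain ⟨v, hv⟩ := exists_r_smul_eq_sr_smul hodd i j
  have entry := coeff_asAlgebraHom_ofMulAction_single x v (r i • v)
  rw [hx, filter_smul_eq_r_smul hv, Finset.sum_pair (by simp)] at entry
  simpa using entry.symm

/-- The sign character of the dihedral group: `1` on rotations and `-1` on reflections. -/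
def dihedralSign (n : ℕ) (R : Type*) [Ring R] : DihedralGroup n →* R where
  toFun
    | r _ => 1
    | sr _ => -1
  map_one' := rfl
  map_mul' := by rintro (i | i) (j | j) <;> simp

variable {R : Type*} [Ring R]

lemma dihedralSign_r (i : ZMod n) : dihedralSign n R (r i) = 1 := rfl

lemma dihedralSign_sr (i : ZMod n) : dihedralSign n R (sr i) = -1 := rfl

lemma single_mul_eq_dihedralSign_smul {x : MonoidAlgebra R (DihedralGroup n)}
    (hx : ∀ i j, x.coeff (r i) + x.coeff (sr j) = 0) (g : DihedralGroup n) :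
    MonoidAlgebra.single g 1 * x = dihedralSign n R g • x := by
  have coeff_sr (j) : x.coeff (sr j) = -x.coeff (r 0) := eq_neg_of_add_eq_zero_right (hx 0 j)
  have coeff_r (i) : x.coeff (r i) = x.coeff (r 0) := by
    rw [eq_neg_of_add_eq_zero_left (hx i 0), coeff_sr, neg_neg]
  ext h
  rcases g with i | i <;> rcases h with j | j <;>
    simp [dihedralSign_r, dihedralSign_sr, coeff_r, coeff_sr, -r_zero]

end Dihedral

theorem stmt_14_general {R : Type*} [CommRing R] {n : ℕ} (hodd : Odd n)
    (τ : MonoidAlgebra R (DihedralGroup n)) :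
    (minpoly R τ).natDegree ≤ n + 1 := by
  nontriviality R
  have : NeZero n := ⟨hodd.pos.ne'⟩
  let φ := (Representation.ofMulAction R (DihedralGroup n) (ZMod n)).asAlgebraHom
  let s := MonoidAlgebra.lift R R _ (dihedralSign n R) τ
  have hker (x) (hx : φ x = 0) : aeval τ (X - C s) * x = 0 := by
    have mul_eq_smul : τ * x = s • x :=
      smul_eq_lift_smul_of_single_smul (dihedralSign n R)
        (single_mul_eq_dihedralSign_smul (coeff_r_add_coeff_sr_eq_zero hodd hx)) τ
    rw [map_sub, aeval_X, aeval_C, sub_mul, mul_eq_smul, Algebra.smul_def, sub_self]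
  have finrank_eq : Module.finrank R (MonoidAlgebra R (ZMod n)) = n := by
    rw [(MonoidAlgebra.coeffLinearEquiv R).finrank_eq, Module.finrank_finsupp_self, ZMod.card]
  calc (minpoly R τ).natDegree
      ≤ (X - C s).natDegree + Module.finrank R (MonoidAlgebra R (ZMod n)) :=
        natDegree_minpoly_le_natDegree_add_finrank φ (monic_X_sub_C s) hker
    _ = n + 1 := by rw [natDegree_X_sub_C, finrank_eq, add_comm]

theorem stmt_14 (F : Type*) [Field F] (n : ℕ) (hn : 3 ≤ n) (hodd : Odd n)
    (τ : MonoidAlgebra F (DihedralGroup n)) :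
    (minpoly F τ).natDegree ≤ n + 1 :=
  stmt_14_general hodd τ
end

section
/- Let F be an arbitrary field and n ≥ 4 even. Then m(F D_n) ≤ n + 2; that is, every element τ of the group algebra F D_n has a minimal polynomial over F of degree at most n + 2. -/
/-!
Write `A` for the group algebra of the rotations, `σ` for the involution of `A` induced by
inversion and `S` for the `σ`-fixed elements of `A`, which are central in the group algebra of the
dihedral group. An element of the latter is `τ = f + g b` with `f, g ∈ A` and `b` a reflection, and
since `b f = σ(f) b` it is a root of the monic polynomial
`X² - (f + σ f) X + (f σ(f) - g σ(g))` over `S`. An element of `S` is freely determined by its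
coefficients at the rotations `0, …, n / 2`, so `S` is free of rank `n / 2 + 1` and `τ` is a root of
a monic polynomial of degree `2 (n / 2 + 1)` over the ground ring.
-/

open Polynomial

theorem natDegree_minpoly_le_of_aeval_eq_zero {R S A : Type*} [CommRing R] [CommRing S] [Ring A]
    [Algebra R S] [Algebra S A] [Algebra R A] [IsScalarTower R S A]
    [Module.Finite R S] [Module.Free R S] {p : S[X]} (hp : p.Monic) {a : A}
    (ha : aeval a p = 0) :
    (minpoly R a).natDegree ≤ p.natDegree * Module.finrank R S := by
  rcases subsingleton_or_nontrivial S with hS | hS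
  · have : Subsingleton A := Module.subsingleton S A
    simp [minpoly.subsingleton]
  have : Nontrivial R := (algebraMap R S).domain_nontrivial
  have : Module.Free S (AdjoinRoot p) := hp.free_adjoinRoot
  have : Module.Finite S (AdjoinRoot p) := hp.finite_adjoinRoot
  have : Module.Finite R (AdjoinRoot p) := .trans S _
  have : Module.Free R (AdjoinRoot p) := .trans (S := S)
  -- A polynomial over `R` that annihilates the universal root of `p` annihilates every root of `p`.
  let q := minpoly R (AdjoinRoot.root p)
  have hq : q.Monic := minpoly.monic (Algebra.IsIntegral.isIntegral _)
  have hpq : p ∣ q.map (algebraMap R S) := by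
    rw [← AdjoinRoot.mk_eq_zero, ← AdjoinRoot.aeval_eq_of_algebra]
    exact minpoly.aeval R _
  have hqa : aeval a q = 0 := by
    rw [← aeval_map_algebraMap S]
    exact aeval_eq_zero_of_dvd_aeval_eq_zero hpq ha
  calc (minpoly R a).natDegree
      ≤ q.natDegree := natDegree_le_natDegree (minpoly.min R a hq hqa)
    _ ≤ Module.finrank R (AdjoinRoot p) := minpoly.natDegree_le _
    _ = p.natDegree * Module.finrank R S := by
        rw [← Module.finrank_mul_finrank R S, (AdjoinRoot.powerBasis' hp).finrank,
          AdjoinRoot.powerBasis'_dim, mul_comm]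

theorem add_mul_sq_of_semiconjBy {A : Type*} [Ring A] {f f' g g' b : A}
    (hf : SemiconjBy b f f') (hg : SemiconjBy b g g') (hff' : Commute f f') (hgf' : Commute g f') :
    (f + g * b) ^ 2 = (f + f') * (f + g * b) - (f * f' - g * g' * b ^ 2) := by
  have hgbf : g * b * f = f' * (g * b) := by
    rw [mul_assoc, hf.eq, ← mul_assoc, hgf'.eq, mul_assoc]
  have hgbgb : g * b * (g * b) = g * g' * b ^ 2 := by
    rw [mul_assoc, ← mul_assoc b, hg.eq, sq]
    simp only [mul_assoc]
  rw [sq, add_mul, mul_add, mul_add, hgbf, hgbgb, add_mul, mul_add, mul_add, hff'.eq]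
  abel

section SymmetricElements

variable (R G : Type*) [CommRing R] [CommGroup G]

/-- The involution of the group algebra of a commutative group induced by `g ↦ g⁻¹`. -/
noncomputable def groupAlgebraInversion : MonoidAlgebra R G ≃ₐ[R] MonoidAlgebra R G :=
  MonoidAlgebra.domCongr R R (MulEquiv.inv G)

/-- The subalgebra of a commutative group algebra fixed by the involution `g ↦ g⁻¹`. -/
noncomputable def symmetricSubalgebra : Subalgebra R (MonoidAlgebra R G) :=
  AlgHom.equalizer (groupAlgebraInversion R G : MonoidAlgebra R G →ₐ[R] MonoidAlgebra R G)
    (AlgHom.id R _)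

variable {R G}

theorem coeff_groupAlgebraInversion (x : MonoidAlgebra R G) (g : G) :
    (groupAlgebraInversion R G x).coeff g = x.coeff g⁻¹ :=
  MonoidAlgebra.coeff_domCongr ..

theorem groupAlgebraInversion_single (g : G) (c : R) :
    groupAlgebraInversion R G (.single g c) = .single g⁻¹ c :=
  MonoidAlgebra.domCongr_single ..

theorem groupAlgebraInversion_involutive :
    Function.Involutive (groupAlgebraInversion R G) := fun x ↦ by
  ext g
  simp only [coeff_groupAlgebraInversion, inv_inv]

theorem mem_symmetricSubalgebra {x : MonoidAlgebra R G} :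
    x ∈ symmetricSubalgebra R G ↔ groupAlgebraInversion R G x = x :=
  Iff.rfl

theorem mem_symmetricSubalgebra_iff_coeff_inv {x : MonoidAlgebra R G} :
    x ∈ symmetricSubalgebra R G ↔ ∀ g, x.coeff g⁻¹ = x.coeff g := by
  simp only [mem_symmetricSubalgebra, MonoidAlgebra.ext_iff, Finsupp.ext_iff,
    coeff_groupAlgebraInversion]

theorem add_groupAlgebraInversion_mem_symmetricSubalgebra (x : MonoidAlgebra R G) :
    x + groupAlgebraInversion R G x ∈ symmetricSubalgebra R G := by
  rw [mem_symmetricSubalgebra, map_add, groupAlgebraInversion_involutive, add_comm]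

theorem mul_groupAlgebraInversion_mem_symmetricSubalgebra (x : MonoidAlgebra R G) :
    x * groupAlgebraInversion R G x ∈ symmetricSubalgebra R G := by
  rw [mem_symmetricSubalgebra, map_mul, groupAlgebraInversion_involutive, mul_comm]

end SymmetricElements

section Dihedral

variable (R : Type*) [CommRing R] (n : ℕ)

open Multiplicative (ofAdd toAdd)

variable {R n} in
theorem coeff_natAbs_valMinAbs [NeZero n] {x : MonoidAlgebra R (Multiplicative (ZMod n))}
    (hx : x ∈ symmetricSubalgebra R _) (i : ZMod n) :
    x.coeff (ofAdd ((i.valMinAbs.natAbs : ℕ) : ZMod n)) = x.coeff (ofAdd i) := by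
  rw [ZMod.natCast_natAbs_valMinAbs]
  split_ifs
  · rfl
  · exact mem_symmetricSubalgebra_iff_coeff_inv.1 hx (ofAdd i)

/-- A symmetric element of the group algebra of `ℤ/n` is freely determined by its coefficients at
`0, …, n / 2`; the coefficient at `i` is the one at the distance from `i` to `0` on the cycle. -/
noncomputable def symmetricCoeffEquiv [NeZero n] :
    symmetricSubalgebra R (Multiplicative (ZMod n)) ≃ₗ[R] (Fin (n / 2 + 1) → R) where
  toFun x j := (x : MonoidAlgebra R (Multiplicative (ZMod n))).coeff (ofAdd ((j : ℕ) : ZMod n))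
  map_add' _ _ := rfl
  map_smul' _ _ := rfl
  invFun v :=
    ⟨.ofCoeff <| Finsupp.equivFunOnFinite.symm fun i ↦
        v ⟨(toAdd i).valMinAbs.natAbs, Nat.lt_succ_of_le (ZMod.natAbs_valMinAbs_le _)⟩,
      mem_symmetricSubalgebra_iff_coeff_inv.2 fun i ↦ by
        simp [ZMod.natAbs_valMinAbs_neg]⟩
  left_inv x := by
    ext i
    exact coeff_natAbs_valMinAbs x.2 (toAdd i)
  right_inv v := by
    ext j
    simp [ZMod.valMinAbs_natCast_of_le_half (Nat.le_of_lt_succ j.2)]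

instance [NeZero n] : Module.Free R (symmetricSubalgebra R (Multiplicative (ZMod n))) :=
  .of_equiv (symmetricCoeffEquiv R n).symm

instance [NeZero n] : Module.Finite R (symmetricSubalgebra R (Multiplicative (ZMod n))) :=
  .equiv (symmetricCoeffEquiv R n).symm

theorem finrank_symmetricSubalgebra_zmod [Nontrivial R] [NeZero n] :
    Module.finrank R (symmetricSubalgebra R (Multiplicative (ZMod n))) = n / 2 + 1 := by
  rw [(symmetricCoeffEquiv R n).finrank_eq, Module.finrank_fin_fun]

/-- The inclusion of the rotations, written multiplicatively, into the dihedral group. -/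
def rotationHom : Multiplicative (ZMod n) →* DihedralGroup n where
  toFun i := .r (toAdd i)
  map_one' := rfl
  map_mul' _ _ := rfl

/-- The inclusion of the group algebra of the rotations into that of the dihedral group. -/
noncomputable def rotationAlgHom :
    MonoidAlgebra R (Multiplicative (ZMod n)) →ₐ[R] MonoidAlgebra R (DihedralGroup n) :=
  MonoidAlgebra.mapDomainAlgHom R R (rotationHom n)

/-- A reflection, viewed in the group algebra; every other one is a rotation times it. -/
noncomputable def dihedralReflection : MonoidAlgebra R (DihedralGroup n) :=
  .single (.sr 0) 1

variable {R n}

theorem rotationAlgHom_single (i : Multiplicative (ZMod n)) (c : R) :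
    rotationAlgHom R n (.single i c) = .single (.r (toAdd i)) c :=
  MonoidAlgebra.mapDomain_single ..

theorem dihedralReflection_sq : dihedralReflection R n ^ 2 = 1 := by
  simp [dihedralReflection, sq, MonoidAlgebra.single_mul_single, MonoidAlgebra.one_def]

theorem semiconjBy_dihedralReflection (x : MonoidAlgebra R (Multiplicative (ZMod n))) :
    SemiconjBy (dihedralReflection R n) (rotationAlgHom R n x)
      (rotationAlgHom R n (groupAlgebraInversion R _ x)) := by
  induction x using MonoidAlgebra.induction_linear with
  | zero => simp
  | add x y hx hy => simpa only [map_add] using hx.add_right hy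
  | single i c =>
    simp [SemiconjBy, groupAlgebraInversion_single, rotationAlgHom_single, dihedralReflection,
      MonoidAlgebra.single_mul_single]

theorem exists_eq_rotation_add_rotation_mul_reflection (τ : MonoidAlgebra R (DihedralGroup n)) :
    ∃ f g, τ = rotationAlgHom R n f + rotationAlgHom R n g * dihedralReflection R n := by
  induction τ using MonoidAlgebra.induction_linear with
  | zero => exact ⟨0, 0, by simp⟩
  | add x y hx hy =>
    obtain ⟨f, g, rfl⟩ := hx
    obtain ⟨f', g', rfl⟩ := hy
    exact ⟨f + f', g + g', by simp only [map_add, add_mul, add_add_add_comm]⟩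
  | single d c =>
    cases d with
    | r i => exact ⟨.single (ofAdd i) c, 0, by simp [rotationAlgHom_single]⟩
    | sr i =>
      exact ⟨0, .single (ofAdd (-i)) c, by
        simp [rotationAlgHom_single, dihedralReflection, MonoidAlgebra.single_mul_single]⟩

theorem commute_rotationAlgHom_of_mem_symmetricSubalgebra
    {s : MonoidAlgebra R (Multiplicative (ZMod n))} (hs : s ∈ symmetricSubalgebra R _)
    (τ : MonoidAlgebra R (DihedralGroup n)) : Commute (rotationAlgHom R n s) τ := by
  obtain ⟨f, g, rfl⟩ := exists_eq_rotation_add_rotation_mul_reflection τ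
  have hrot (x) : Commute (rotationAlgHom R n s) (rotationAlgHom R n x) :=
    (Commute.all s x).map _
  have hrefl : Commute (dihedralReflection R n) (rotationAlgHom R n s) := by
    have := semiconjBy_dihedralReflection s
    rwa [mem_symmetricSubalgebra.1 hs] at this
  exact (hrot f).add_right ((hrot g).mul_right hrefl.symm)

noncomputable instance : Algebra (symmetricSubalgebra R (Multiplicative (ZMod n)))
    (MonoidAlgebra R (DihedralGroup n)) :=
  RingHom.toAlgebra' ((rotationAlgHom R n).comp (Subalgebra.val _)).toRingHom
    fun s ↦ commute_rotationAlgHom_of_mem_symmetricSubalgebra s.2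

theorem algebraMap_symmetricSubalgebra
    (s : symmetricSubalgebra R (Multiplicative (ZMod n))) :
    algebraMap _ (MonoidAlgebra R (DihedralGroup n)) s = rotationAlgHom R n s :=
  rfl

instance : IsScalarTower R (symmetricSubalgebra R (Multiplicative (ZMod n)))
    (MonoidAlgebra R (DihedralGroup n)) :=
  .of_algebraMap_eq fun c ↦ ((rotationAlgHom R n).commutes c).symm

theorem exists_sq_eq_algebraMap_mul_sub_algebraMap (τ : MonoidAlgebra R (DihedralGroup n)) :
    ∃ t u : symmetricSubalgebra R (Multiplicative (ZMod n)),
      τ ^ 2 = algebraMap _ _ t * τ - algebraMap _ _ u := by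
  obtain ⟨f, g, rfl⟩ := exists_eq_rotation_add_rotation_mul_reflection τ
  let σ := groupAlgebraInversion R (Multiplicative (ZMod n))
  refine ⟨⟨f + σ f, add_groupAlgebraInversion_mem_symmetricSubalgebra f⟩,
    ⟨f * σ f - g * σ g, sub_mem (mul_groupAlgebraInversion_mem_symmetricSubalgebra f)
      (mul_groupAlgebraInversion_mem_symmetricSubalgebra g)⟩, ?_⟩
  rw [add_mul_sq_of_semiconjBy (semiconjBy_dihedralReflection f) (semiconjBy_dihedralReflection g)
    ((Commute.all f (σ f)).map (rotationAlgHom R n))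
    ((Commute.all g (σ f)).map (rotationAlgHom R n))]
  simp only [algebraMap_symmetricSubalgebra, map_add, map_sub, map_mul, dihedralReflection_sq,
    mul_one, σ]

theorem exists_monic_natDegree_le_two_aeval_eq_zero (τ : MonoidAlgebra R (DihedralGroup n)) :
    ∃ p : (symmetricSubalgebra R (Multiplicative (ZMod n)))[X],
      p.Monic ∧ p.natDegree ≤ 2 ∧ aeval τ p = 0 := by
  obtain ⟨t, u, hτ⟩ := exists_sq_eq_algebraMap_mul_sub_algebraMap τ
  refine ⟨X ^ 2 - (C t * X - C u), monic_X_pow_sub (by compute_degree!), by compute_degree!, ?_⟩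
  simp only [aeval_sub, aeval_mul, aeval_X_pow, aeval_X, aeval_C, hτ, sub_self]

end Dihedral

/-- As `n / 2` is rounded down, the bound is `n + 2` for even `n` and `n + 1` for odd `n`. -/
theorem stmt_15_general {R : Type*} [CommRing R] {n : ℕ} [NeZero n]
    (τ : MonoidAlgebra R (DihedralGroup n)) :
    (minpoly R τ).natDegree ≤ 2 * (n / 2 + 1) := by
  nontriviality R
  obtain ⟨p, hmonic, hdeg, hroot⟩ := exists_monic_natDegree_le_two_aeval_eq_zero τ
  calc (minpoly R τ).natDegree
      ≤ p.natDegree * Module.finrank R (symmetricSubalgebra R (Multiplicative (ZMod n))) :=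
        natDegree_minpoly_le_of_aeval_eq_zero hmonic hroot
    _ = p.natDegree * (n / 2 + 1) := by rw [finrank_symmetricSubalgebra_zmod]
    _ ≤ 2 * (n / 2 + 1) := Nat.mul_le_mul_right _ hdeg

theorem stmt_15 (F : Type*) [Field F] (n : ℕ) (hn : 4 ≤ n) (heven : Even n)
    (τ : MonoidAlgebra F (DihedralGroup n)) :
    (minpoly F τ).natDegree ≤ n + 2 := by
  have : NeZero n := ⟨by omega⟩
  have hτ := stmt_15_general τ
  rw [mul_add_one, Nat.two_mul_div_two_of_even heven] at hτ
  exact hτ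
end
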